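/- arXiv:2510.09431 — 6 statements merged into one kernel-verified Lean document; each statement's English description precedes it below -/
import Mathlib

section
/- (Floating-point right-turn test is accurate for points far from the line.) Let p, u, q ∈ ℝ² with p ≠ q, let 0 < ε < 1/6, set γ₆ := 6ε/(1−6ε), and let M ≥ 0 bound the absolute value of every coordinate of p, u, and q. Suppose δ₁, …, δ₆ are real numbers with |δᵢ| ≤ ε for all i, and suppose the floating-point evaluation of the right-turn test disagrees with the exact test, i.e. either (a) orient(p,u,q) > 0 but (1+δ₁)(1+δ₂)(1+δ₃)·(p_x−u_x)(q_y−p_y) ≤ (1+δ₄)(1+δ₅)(1+δ₆)·(p_y−u_y)(q_x−p_x), or (b) orient(p,u,q) ≤ 0 but (1+δ₁)(1+δ₂)(1+δ₃)·(p_x−u_x)(q_y−p_y) > (1+δ₄)(1+δ₅)(1+δ₆)·(p_y−u_y)(q_x−p_x). Then the distance from u to the line through p and q satisfies d(u, L(p,q)) ≤ 2·γ₆·M. -/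
/-- The orientation of three points in the plane. -/
def orient (p u q : EuclideanSpace ℝ (Fin 2)) : ℝ :=
  (p 0 - u 0) * (q 1 - u 1) - (p 1 - u 1) * (q 0 - u 0)

lemma prod_bounds (ε x y z : ℝ) (h1 : ε < 1 / 6) (hx : |x| ≤ ε) (hy : |y| ≤ ε)
    (hz : |z| ≤ ε) :
    (1 - ε) ^ 3 ≤ (1 + x) * (1 + y) * (1 + z) ∧
      (1 + x) * (1 + y) * (1 + z) ≤ (1 + ε) ^ 3 := by
  rw [abs_le] at hx hy hz
  have e1 : (1 - ε) ^ 3 = (1 - ε) * (1 - ε) * (1 - ε) := by ring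
  have e2 : (1 + ε) ^ 3 = (1 + ε) * (1 + ε) * (1 + ε) := by ring
  have p0 : 0 ≤ 1 - ε := by linarith
  have p1 : 0 ≤ 1 + x := by linarith
  have p2 : 0 ≤ 1 + y := by linarith
  have p3 : 0 ≤ 1 + z := by linarith
  have p4 : 0 ≤ 1 + ε := by linarith
  rw [e1, e2]
  constructor <;> gcongr <;> linarith

lemma key_bound (s A B a b : ℝ) (hs : 0 < s) (hs1 : s ≤ 1) (hA : 0 < A) (hB : 0 < B)
    (h1 : s * B ≤ A) (h2 : s * A ≤ B) (hab : b ≤ a) (h : A * a ≤ B * b) :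
    s * (a - b) ≤ (1 - s) * |a| := by
  rcases le_total 0 a with ha | ha
  · rw [abs_of_nonneg ha]
    have h3 : s * a ≤ b := by
      have := mul_le_mul_of_nonneg_right h1 ha
      by_contra hc
      have := mul_lt_mul_of_pos_left (not_le.mp hc) hB
      nlinarith
    have h4 : a - b ≤ (1 - s) * a := by linarith
    nlinarith
  · rw [abs_of_nonpos ha]
    have hb : b ≤ 0 := hab.trans ha
    have h3 : a ≤ s * b := by
      have := mul_le_mul_of_nonpos_right h2 hb
      by_contra hc
      have := mul_lt_mul_of_pos_left (not_le.mp hc) hA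
      nlinarith
    linarith

set_option maxHeartbeats 1000000 in
/-- If the floating-point right-turn test disagrees with the exact right-turn test,
then `u` is within distance `2 * γ₆ * M` of the line through `p` and `q`. -/
theorem right_turn_test_accurate
    (p u q : EuclideanSpace ℝ (Fin 2)) (hpq : p ≠ q)
    (ε M : ℝ) (hε : 0 < ε) (hε6 : ε < 1 / 6) (hM : 0 ≤ M)
    (hpM : ∀ i, |p i| ≤ M) (huM : ∀ i, |u i| ≤ M) (hqM : ∀ i, |q i| ≤ M)
    (δ : Fin 6 → ℝ) (hδ : ∀ i, |δ i| ≤ ε)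
    (hdisagree :
      (orient p u q > 0 ∧
        (1 + δ 0) * (1 + δ 1) * (1 + δ 2) * ((p 0 - u 0) * (q 1 - p 1)) ≤
          (1 + δ 3) * (1 + δ 4) * (1 + δ 5) * ((p 1 - u 1) * (q 0 - p 0))) ∨
      (orient p u q ≤ 0 ∧
        (1 + δ 0) * (1 + δ 1) * (1 + δ 2) * ((p 0 - u 0) * (q 1 - p 1)) >
          (1 + δ 3) * (1 + δ 4) * (1 + δ 5) * ((p 1 - u 1) * (q 0 - p 0)))) :
    Metric.infDist u (affineSpan ℝ {p, q} : Set (EuclideanSpace ℝ (Fin 2)))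
      ≤ 2 * (6 * ε / (1 - 6 * ε)) * M := by
  have e6 : 0 < 1 - 6 * ε := by linarith
  obtain ⟨hA1, hA2⟩ := prod_bounds ε _ _ _ hε6 (hδ 0) (hδ 1) (hδ 2)
  obtain ⟨hB1, hB2⟩ := prod_bounds ε _ _ _ hε6 (hδ 3) (hδ 4) (hδ 5)
  set A := (1 + δ 0) * (1 + δ 1) * (1 + δ 2)
  set B := (1 + δ 3) * (1 + δ 4) * (1 + δ 5)
  have hpos : 0 < (1 - ε) ^ 3 := pow_pos (by linarith) 3
  have hA : 0 < A := hpos.trans_le hA1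
  have hB : 0 < B := hpos.trans_le hB1
  have hc : (1 - 6 * ε) * (1 + ε) ^ 3 ≤ (1 - ε) ^ 3 := by
    have : (1 - ε) ^ 3 - (1 - 6 * ε) * (1 + ε) ^ 3
        = 18 * ε ^ 2 + 16 * ε ^ 3 + 6 * ε ^ 4 := by ring
    have : 0 ≤ 18 * ε ^ 2 + 16 * ε ^ 3 + 6 * ε ^ 4 := by positivity
    linarith
  have h1 : (1 - 6 * ε) * B ≤ A :=
    (mul_le_mul_of_nonneg_left hB2 e6.le).trans (hc.trans hA1)
  have h2 : (1 - 6 * ε) * A ≤ B :=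
    (mul_le_mul_of_nonneg_left hA2 e6.le).trans (hc.trans hB1)
  have ho : orient p u q = (p 0 - u 0) * (q 1 - p 1) - (p 1 - u 1) * (q 0 - p 0) := by
    unfold orient; ring
  rw [ho] at hdisagree
  set a := (p 0 - u 0) * (q 1 - p 1) with ha
  set b := (p 1 - u 1) * (q 0 - p 0) with hb
  have hab : (1 - 6 * ε) * |a - b| ≤ 6 * ε * |a| := by
    rcases hdisagree with ⟨g1, g2⟩ | ⟨g1, g2⟩
    · rw [abs_of_pos g1]
      have := key_bound _ A B a b e6 (by linarith) hA hB h1 h2 (by linarith) g2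
      linarith
    · rw [abs_of_nonpos g1]
      have := key_bound _ A B (-a) (-b) e6 (by linarith) hA hB h1 h2 (by linarith)
        (by linarith)
      rw [abs_neg] at this
      linarith
  have hx : |p 0 - u 0| ≤ 2 * M := by
    have := abs_sub (p 0) (u 0)
    linarith [hpM 0, huM 0]
  have hab2 : |a - b| ≤ 2 * (6 * ε / (1 - 6 * ε)) * M * |q 1 - p 1| := by
    have h3 : |a| ≤ 2 * M * |q 1 - p 1| := by
      rw [ha, abs_mul]; gcongr
    have h4 : |a - b| ≤ 6 * ε * (2 * M * |q 1 - p 1|) / (1 - 6 * ε) := by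
      rw [le_div_iff₀ e6]
      have := mul_le_mul_of_nonneg_left h3 (show 0 ≤ 6 * ε by linarith)
      linarith
    calc _ ≤ _ := h4
      _ = _ := by ring
  set k := 2 * (6 * ε / (1 - 6 * ε)) * M with hk
  have hk0 : 0 ≤ k := by positivity
  have hsq : (a - b) ^ 2 ≤ k ^ 2 * (q 1 - p 1) ^ 2 := by
    rw [← mul_pow]
    apply sq_le_sq.mpr
    rwa [abs_mul, abs_of_nonneg hk0]
  have hD : 0 < (q 0 - p 0) ^ 2 + (q 1 - p 1) ^ 2 := by
    by_contra hcon
    apply hpq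
    have z0 : q 0 - p 0 = 0 :=
      pow_eq_zero_iff two_ne_zero |>.mp (le_antisymm (by linarith [sq_nonneg (q 0 - p 0), sq_nonneg (q 1 - p 1)]) (sq_nonneg _))
    have z1 : q 1 - p 1 = 0 :=
      pow_eq_zero_iff two_ne_zero |>.mp (le_antisymm (by linarith [sq_nonneg (q 0 - p 0), sq_nonneg (q 1 - p 1)]) (sq_nonneg _))
    ext i
    fin_cases i
    · exact (sub_eq_zero.mp z0).symm
    · exact (sub_eq_zero.mp z1).symm
  set D := (q 0 - p 0) ^ 2 + (q 1 - p 1) ^ 2 with hDdef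
  set t := ((u 0 - p 0) * (q 0 - p 0) + (u 1 - p 1) * (q 1 - p 1)) / D with ht
  refine (Metric.infDist_le_dist_of_mem
    (AffineMap.lineMap_mem_affineSpan_pair t p q)).trans ?_
  rw [EuclideanSpace.dist_eq]
  apply Real.sqrt_le_iff.mpr
  refine ⟨hk0, ?_⟩
  simp only [Fin.sum_univ_two, Real.dist_eq, sq_abs, AffineMap.lineMap_apply, vsub_eq_sub,
    vadd_eq_add, PiLp.add_apply, PiLp.smul_apply, PiLp.sub_apply, smul_eq_mul]
  have htD : t * D = (u 0 - p 0) * (q 0 - p 0) + (u 1 - p 1) * (q 1 - p 1) := by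
    rw [ht]; field_simp
  have hid : ((u 0 - (t * (q 0 - p 0) + p 0)) ^ 2 + (u 1 - (t * (q 1 - p 1) + p 1)) ^ 2) * D
      = (a - b) ^ 2 := by
    have : ((u 0 - (t * (q 0 - p 0) + p 0)) ^ 2 + (u 1 - (t * (q 1 - p 1) + p 1)) ^ 2) * D
      = ((u 0 - p 0) ^ 2 + (u 1 - p 1) ^ 2) * D
        - 2 * (t * D) * ((u 0 - p 0) * (q 0 - p 0) + (u 1 - p 1) * (q 1 - p 1))
        + (t * D) ^ 2 := by
      rw [hDdef]; ring
    rw [this, htD, hDdef, ha, hb]; ring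
  refine le_of_mul_le_mul_right ?_ hD
  rw [hid]
  refine hsq.trans (mul_le_mul_of_nonneg_left ?_ (sq_nonneg k))
  rw [hDdef]
  linarith [sq_nonneg (q 0 - p 0)]
end

section
/- (Floating-point distance comparison is accurate.) Let p, q, u, u' ∈ ℝ² with p ≠ q, let γ ≥ 0, and let M ≥ 0 bound the absolute value of every coordinate of p, q, u, and u'. If |(q_y−p_y)(u_x−u'_x) − (q_x−p_x)(u_y−u'_y)| ≤ γ·|(q_x−p_x)(u_y−u'_y)|, then the distances of u and u' to the line through p and q differ by at most 2γM: |d(u, L(p,q)) − d(u', L(p,q))| ≤ 2·γ·M. -/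
theorem infDist_aux (p q u u' : EuclideanSpace ℝ (Fin 2)) (t c : ℝ)
    (hc : ‖u - u' - t • (q - p)‖ ≤ c) :
    Metric.infDist u (affineSpan ℝ {p, q} : Set (EuclideanSpace ℝ (Fin 2))) -
      Metric.infDist u' (affineSpan ℝ {p, q} : Set (EuclideanSpace ℝ (Fin 2))) ≤ c := by
  have hp : p ∈ affineSpan ℝ {p, q} := left_mem_affineSpan_pair ℝ p q
  have hq : q ∈ affineSpan ℝ {p, q} := right_mem_affineSpan_pair ℝ p q
  have key : Metric.infDist u (affineSpan ℝ {p, q} : Set (EuclideanSpace ℝ (Fin 2))) - c ≤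
      Metric.infDist u' (affineSpan ℝ {p, q} : Set (EuclideanSpace ℝ (Fin 2))) := by
    rw [Metric.le_infDist ⟨p, hp⟩]
    intro y hy
    have hz : t • (q - p) + y ∈ affineSpan ℝ {p, q} := by
      have := (affineSpan ℝ {p, q}).smul_vsub_vadd_mem t hq hp hy
      simpa using this
    have h1 := Metric.infDist_le_dist_of_mem (x := u) (SetLike.mem_coe.2 hz)
    rw [dist_eq_norm] at h1 ⊢
    have h2 : u - (t • (q - p) + y) = (u - u' - t • (q - p)) + (u' - y) := by abel
    rw [h2] at h1
    have h3 := norm_add_le (u - u' - t • (q - p)) (u' - y)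
    linarith
  linarith

/-- If the (perturbed) floating-point farther-from-line comparison disagrees with the
exact one, witnessed by the stated inequality, then the distances of `u` and `u'` to
the line through `p` and `q` differ by at most `2 * γ * M`. -/
theorem farther_test_accurate
    (p q u u' : EuclideanSpace ℝ (Fin 2)) (hpq : p ≠ q)
    (γ M : ℝ) (hγ : 0 ≤ γ) (hM : 0 ≤ M)
    (hpM : ∀ i, |p i| ≤ M) (hqM : ∀ i, |q i| ≤ M)
    (huM : ∀ i, |u i| ≤ M) (hu'M : ∀ i, |u' i| ≤ M)
    (h : |(q 1 - p 1) * (u 0 - u' 0) - (q 0 - p 0) * (u 1 - u' 1)| ≤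
      γ * |(q 0 - p 0) * (u 1 - u' 1)|) :
    |Metric.infDist u (affineSpan ℝ {p, q} : Set (EuclideanSpace ℝ (Fin 2))) -
      Metric.infDist u' (affineSpan ℝ {p, q} : Set (EuclideanSpace ℝ (Fin 2)))|
      ≤ 2 * γ * M := by
  have hD : 0 < (q 0 - p 0) ^ 2 + (q 1 - p 1) ^ 2 := by
    by_contra hn
    apply hpq
    have h0 : q 0 - p 0 = 0 := by nlinarith [sq_nonneg (q 0 - p 0), sq_nonneg (q 1 - p 1)]
    have h1 : q 1 - p 1 = 0 := by nlinarith [sq_nonneg (q 0 - p 0), sq_nonneg (q 1 - p 1)]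
    ext i
    fin_cases i
    · simp; linarith
    · simp; linarith
  have hw : |u 1 - u' 1| ≤ 2 * M := by
    have := abs_sub (u 1) (u' 1)
    linarith [huM 1, hu'M 1]
  have main : ∃ t : ℝ, ‖u - u' - t • (q - p)‖ ≤ 2 * γ * M := by
    refine ⟨((u 0 - u' 0) * (q 0 - p 0) + (u 1 - u' 1) * (q 1 - p 1)) /
      ((q 0 - p 0) ^ 2 + (q 1 - p 1) ^ 2), ?_⟩
    rw [EuclideanSpace.norm_eq]
    apply Real.sqrt_le_iff.2
    refine ⟨by positivity, ?_⟩
    simp only [Fin.sum_univ_two, Real.norm_eq_abs, sq_abs, PiLp.sub_apply, PiLp.smul_apply,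
      smul_eq_mul]
    have h2 : |(q 1 - p 1) * (u 0 - u' 0) - (q 0 - p 0) * (u 1 - u' 1)| ≤
        |q 0 - p 0| * (2 * γ * M) := by
      refine h.trans ?_
      rw [abs_mul]
      have := mul_le_mul_of_nonneg_left hw (mul_nonneg hγ (abs_nonneg (q 0 - p 0)))
      linarith
    have h3 := pow_le_pow_left₀ (abs_nonneg _) h2 2
    rw [mul_pow, sq_abs, sq_abs] at h3
    generalize q 0 - p 0 = a at *
    generalize q 1 - p 1 = b at *
    generalize u 0 - u' 0 = x at *
    generalize u 1 - u' 1 = y at *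
    have e : (x - (x * a + y * b) / (a ^ 2 + b ^ 2) * a) ^ 2 +
        (y - (x * a + y * b) / (a ^ 2 + b ^ 2) * b) ^ 2 =
        (b * x - a * y) ^ 2 / (a ^ 2 + b ^ 2) := by
      field_simp
      ring
    rw [e, div_le_iff₀ hD]
    nlinarith [mul_nonneg (sq_nonneg b) (sq_nonneg (2 * γ * M))]
  obtain ⟨t, ht⟩ := main
  rw [abs_le]
  have h1 := infDist_aux p q u u' t _ ht
  have h2 := infDist_aux p q u' u (-t) (2 * γ * M) (by
    have e : u' - u - (-t) • (q - p) = -(u - u' - t • (q - p)) := by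
      rw [neg_smul]; abel
    rw [e, norm_neg]
    exact ht)
  constructor <;> linarith
end

section
/- (Error propagation in the sequential farthest-point reduction.) Let α be a type, f : α → ℝ, E ≥ 0, and sel : α → α → α a binary selection function such that for all a, b : α, sel a b = a or sel a b = b, and f(sel a b) ≥ max(f a, f b) − E. Then for every a : α and every list l of elements of α, the left fold satisfies f(List.foldl sel a l) ≥ (max of f over the elements of a :: l) − (length of l)·E. -/
/-- Error propagation in the sequential farthest-point reduction (Algorithm 1):
the left fold of a selection function that loses at most `E` per comparison
achieves the maximum of `f` up to `(length l) * E`. -/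
theorem foldl_sel_ge_max_sub
    {α : Type*} (f : α → ℝ) (E : ℝ) (hE : 0 ≤ E)
    (sel : α → α → α)
    (hsel : ∀ a b, sel a b = a ∨ sel a b = b)
    (hacc : ∀ a b, f (sel a b) ≥ max (f a) (f b) - E) :
    ∀ (a : α) (l : List α), ∀ x ∈ a :: l,
      f (List.foldl sel a l) ≥ f x - (l.length : ℝ) * E := by
  intro a l
  induction l generalizing a with
  | nil =>
    intro x hx
    have h : x = a := by simpa using hx
    subst h
    simp
  | cons b l ih =>
    intro x hx
    have hs := ih (sel a b) (sel a b) (by simp)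
    have hab := hacc a b
    have h1 := le_max_left (f a) (f b)
    have h2 := le_max_right (f a) (f b)
    simp only [List.foldl_cons, List.length_cons, Nat.cast_add, Nat.cast_one]
    rcases List.mem_cons.1 hx with rfl | hx
    · linarith
    · rcases List.mem_cons.1 hx with rfl | hx
      · linarith
      · have h3 := ih (sel a b) x (List.mem_cons_of_mem _ hx)
        linarith
end

section
/- (Error propagation in the blocked farthest-point reduction.) Let α be a type, f : α → ℝ, E ≥ 0, and sel : α → α → α such that for all a, b : α, sel a b = a or sel a b = b, and f(sel a b) ≥ max(f a, f b) − E. Let L be a nonempty list of nonempty lists (blocks) of elements of α, each block of length at most m. Reduce each block by a left fold with sel, then reduce the list of block results by a left fold with sel. The final result r satisfies f(r) ≥ (max of f over all elements of all blocks) − ((m − 1) + (length of L − 1))·E. -/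
/-- Reduce a nonempty list by a left fold with `sel` (junk value on the empty list). -/
def reduce1 {α : Type*} [Inhabited α] (sel : α → α → α) : List α → α
  | [] => default
  | a :: t => t.foldl sel a

theorem foldl_ge_aux {α : Type*} (f : α → ℝ) (E : ℝ) (hE : 0 ≤ E)
    (sel : α → α → α)
    (hacc : ∀ a b, f (sel a b) ≥ max (f a) (f b) - E) (t : List α) :
    ∀ a, ∀ x ∈ a :: t, f (t.foldl sel a) ≥ f x - (t.length : ℝ) * E := by
  induction t with
  | nil =>
    intro a x hx
    have : x = a := by simpa using hx
    subst this
    simp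
  | cons b t ih =>
    intro a x hx
    have h0 := hacc a b
    have h1 := le_max_left (f a) (f b)
    have h2 := le_max_right (f a) (f b)
    have h3 := ih (sel a b) (sel a b) (by simp)
    simp only [List.foldl_cons, List.length_cons, Nat.cast_add, Nat.cast_one]
    rcases List.mem_cons.1 hx with rfl | hx
    · linarith
    rcases List.mem_cons.1 hx with rfl | hx
    · linarith
    · have h4 := ih (sel a b) x (List.mem_cons_of_mem _ hx)
      linarith

theorem reduce1_ge_aux {α : Type*} [Inhabited α] (f : α → ℝ) (E : ℝ) (hE : 0 ≤ E)
    (sel : α → α → α)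
    (hacc : ∀ a b, f (sel a b) ≥ max (f a) (f b) - E) (l : List α) (x : α) (hx : x ∈ l) :
    f (reduce1 sel l) ≥ f x - ((l.length : ℝ) - 1) * E := by
  cases l with
  | nil => simp at hx
  | cons a t =>
    have := foldl_ge_aux f E hE sel hacc t a x hx
    simpa [reduce1] using this

/-- Error propagation in the blocked farthest-point reduction (Algorithm 2):
reducing each block (of length at most `m`) by a left fold and then reducing the
block results achieves the maximum of `f` up to `((m - 1) + (|L| - 1)) * E`. -/
theorem blocked_reduce_ge_max_sub
    {α : Type*} [Inhabited α] (f : α → ℝ) (E : ℝ) (hE : 0 ≤ E)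
    (sel : α → α → α)
    (hsel : ∀ a b, sel a b = a ∨ sel a b = b)
    (hacc : ∀ a b, f (sel a b) ≥ max (f a) (f b) - E)
    (m : ℕ) (L : List (List α)) (hL : L ≠ [])
    (hblocks : ∀ B ∈ L, B ≠ [] ∧ B.length ≤ m) :
    ∀ B ∈ L, ∀ x ∈ B,
      f (reduce1 sel (L.map (reduce1 sel))) ≥
        f x - (((m : ℝ) - 1) + ((L.length : ℝ) - 1)) * E := by
  intro B hB x hx
  have h1 := reduce1_ge_aux f E hE sel hacc B x hx
  have h2 := reduce1_ge_aux f E hE sel hacc (L.map (reduce1 sel)) (reduce1 sel B)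
    (List.mem_map_of_mem hB)
  rw [List.length_map] at h2
  have h3 : (B.length : ℝ) ≤ m := by exact_mod_cast (hblocks B hB).2
  have h4 := mul_le_mul_of_nonneg_right h3 hE
  linarith
end

section
/- (Error propagation in the pairwise/recursive farthest-point reduction.) Let α be a type, f : α → ℝ, E ≥ 0, and sel : α → α → α such that for all a, b : α, sel a b = a or sel a b = b, and f(sel a b) ≥ max(f a, f b) − E. Define the pairwise reduction of a nonempty list recursively: the reduction of a one-element list is its element, and the reduction of a list l with |l| ≥ 2 is sel applied to the pairwise reductions of the first ⌈|l|/2⌉ elements and the remaining elements. Then for every nonempty list l of length n, f(pairwiseReduce sel l) ≥ (max of f over the elements of l) − ⌈log₂ n⌉·E. -/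
/-- Pairwise (recursive halving) reduction of a list by a binary operation `sel`:
a one-element list reduces to its element, and a longer list is split into its
first `⌈n/2⌉` elements and the rest, each reduced recursively, the results being
combined with `sel`. (Junk value on the empty list.) -/
def pairwiseReduce {α : Type*} [Inhabited α] (sel : α → α → α) (l : List α) : α :=
  if _h : l.length ≤ 1 then l.headI
  else
    sel (pairwiseReduce sel (l.take ((l.length + 1) / 2)))
        (pairwiseReduce sel (l.drop ((l.length + 1) / 2)))
  termination_by l.length
  decreasing_by
  · simp only [List.length_take]; omega
  · simp only [List.length_drop]; omega

/-- Error propagation in the pairwise/recursive farthest-point reduction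
(Algorithm 3): the pairwise reduction by a selection function losing at most `E`
per comparison achieves the maximum of `f` up to `⌈log₂ n⌉ * E`. -/
theorem pairwiseReduce_ge_max_sub
    {α : Type*} [Inhabited α] (f : α → ℝ) (E : ℝ) (hE : 0 ≤ E)
    (sel : α → α → α)
    (hsel : ∀ a b, sel a b = a ∨ sel a b = b)
    (hacc : ∀ a b, f (sel a b) ≥ max (f a) (f b) - E)
    (l : List α) (hl : l ≠ []) :
    ∀ x ∈ l, f (pairwiseReduce sel l) ≥ f x - (Nat.clog 2 l.length : ℝ) * E := by
  have key : ∀ (k : ℕ) (l : List α), l.length ≤ 2 ^ k →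
      ∀ x ∈ l, f (pairwiseReduce sel l) ≥ f x - (k : ℝ) * E := by
    intro k
    induction k with
    | zero =>
      intro l hk x hx
      have h1 : l.length ≤ 1 := by simpa using hk
      rw [pairwiseReduce, dif_pos h1]
      match l, h1, hx with
      | [a], _, hx => simp at hx; simp [hx]
    | succ k ih =>
      intro l hk x hx
      have hk0 : (0 : ℝ) ≤ (k : ℝ) * E := mul_nonneg (Nat.cast_nonneg k) hE
      rw [pow_succ] at hk
      push_cast
      by_cases h1 : l.length ≤ 1
      · rw [pairwiseReduce, dif_pos h1]
        match l, h1, hx with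
        | [a], _, hx =>
          simp at hx
          subst hx
          simp only [List.headI]
          linarith
      · rw [pairwiseReduce, dif_neg h1]
        have hx' := hx
        rw [← List.take_append_drop ((l.length + 1) / 2) l, List.mem_append] at hx'
        have h := hacc (pairwiseReduce sel (l.take ((l.length + 1) / 2)))
          (pairwiseReduce sel (l.drop ((l.length + 1) / 2)))
        rcases hx' with hx' | hx'
        · have h2 := ih _ (by simp only [List.length_take]; omega) x hx'
          have h3 := le_max_left (f (pairwiseReduce sel (l.take ((l.length + 1) / 2))))
            (f (pairwiseReduce sel (l.drop ((l.length + 1) / 2))))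
          linarith
        · have h2 := ih _ (by simp only [List.length_drop]; omega) x hx'
          have h3 := le_max_right (f (pairwiseReduce sel (l.take ((l.length + 1) / 2))))
            (f (pairwiseReduce sel (l.drop ((l.length + 1) / 2))))
          linarith
  exact key _ l (Nat.le_pow_clog (by norm_num) _)
end

section
/- (Quickhull's first geometric observation.) Let P be a finite subset of ℝ², let p, q ∈ P with p ≠ q, and let r ∈ P be a strict maximizer of the distance to the line through p and q, i.e. for every u ∈ P with u ≠ r one has d(u, L(p,q)) < d(r, L(p,q)). Then r is an extreme point of the convex hull of P (a vertex of the hull). -/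
theorem infDist_combo_le {E : Type*} [NormedAddCommGroup E] [NormedSpace ℝ E] {s : Set E}
    (hs : Convex ℝ s) (hne : s.Nonempty) (x y : E) {a b : ℝ} (ha : 0 ≤ a) (hb : 0 ≤ b)
    (hab : a + b = 1) :
    Metric.infDist (a • x + b • y) s ≤ a * Metric.infDist x s + b * Metric.infDist y s := by
  refine le_of_forall_pos_le_add fun ε hε => ?_
  obtain ⟨u, hu, hxu⟩ := (Metric.infDist_lt_iff hne).1 (lt_add_of_pos_right (Metric.infDist x s) hε)
  obtain ⟨v, hv, hyv⟩ := (Metric.infDist_lt_iff hne).1 (lt_add_of_pos_right (Metric.infDist y s) hε)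
  have h1 := Metric.infDist_le_dist_of_mem (x := a • x + b • y) (hs hu hv ha hb hab)
  have h2 : dist (a • x + b • y) (a • u + b • v) ≤ a * dist x u + b * dist y v := by
    refine (dist_add_add_le _ _ _ _).trans (le_of_eq ?_)
    rw [dist_smul₀, dist_smul₀, Real.norm_of_nonneg ha, Real.norm_of_nonneg hb]
  have h3 := mul_le_mul_of_nonneg_left hxu.le ha
  have h4 := mul_le_mul_of_nonneg_left hyv.le hb
  have h5 : a * ε + b * ε = ε := by rw [← add_mul, hab, one_mul]
  linarith

/-- Quickhull's first geometric observation: a strict maximizer of the distance to the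
line through two points of `P` is an extreme point (a vertex) of the convex hull of `P`. -/
theorem farthest_point_extreme
    (P : Finset (EuclideanSpace ℝ (Fin 2)))
    (p q r : EuclideanSpace ℝ (Fin 2))
    (hp : p ∈ P) (hq : q ∈ P) (hr : r ∈ P) (hpq : p ≠ q)
    (hmax : ∀ u ∈ P, u ≠ r →
      Metric.infDist u (affineSpan ℝ {p, q} : Set (EuclideanSpace ℝ (Fin 2))) <
        Metric.infDist r (affineSpan ℝ {p, q} : Set (EuclideanSpace ℝ (Fin 2)))) :
    r ∈ Set.extremePoints ℝ
      (convexHull ℝ (P : Set (EuclideanSpace ℝ (Fin 2)))) := by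
  have hconv : Convex ℝ (affineSpan ℝ {p, q} : Set (EuclideanSpace ℝ (Fin 2))) :=
    (affineSpan ℝ {p, q}).convex
  have hne : (affineSpan ℝ {p, q} : Set (EuclideanSpace ℝ (Fin 2))).Nonempty :=
    ⟨p, left_mem_affineSpan_pair ℝ p q⟩
  generalize (affineSpan ℝ {p, q} : Set (EuclideanSpace ℝ (Fin 2))) = L at *
  -- strict combinations: positive weights, one of the points below the maximum
  have key : ∀ x y : EuclideanSpace ℝ (Fin 2), ∀ a b : ℝ, 0 < a → 0 < b → a + b = 1 →
      (x = r ∨ Metric.infDist x L < Metric.infDist r L) →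
      (y = r ∨ Metric.infDist y L < Metric.infDist r L) → ¬ (x = r ∧ y = r) →
      Metric.infDist (a • x + b • y) L < Metric.infDist r L := by
    intro x y a b ha hb hab hx hy hxy
    have h := infDist_combo_le hconv hne x y ha.le hb.le hab
    have hM : a * Metric.infDist r L + b * Metric.infDist r L = Metric.infDist r L := by
      rw [← add_mul, hab, one_mul]
    rcases hx with rfl | hx <;> rcases hy with rfl | hy
    · exact absurd ⟨rfl, rfl⟩ hxy
    · have := mul_lt_mul_of_pos_left hy hb
      linarith
    · have := mul_lt_mul_of_pos_left hx ha
      linarith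
    · have := mul_lt_mul_of_pos_left hx ha
      have := mul_lt_mul_of_pos_left hy hb
      linarith
  have hC : Convex ℝ {x | x = r ∨ Metric.infDist x L < Metric.infDist r L} := by
    rw [convex_iff_forall_pos]
    intro x hx y hy a b ha hb hab
    by_cases hxy : x = r ∧ y = r
    · left
      rw [hxy.1, hxy.2, ← add_smul, hab, one_smul]
    · exact Or.inr (key x y a b ha hb hab hx hy hxy)
  have hsub := convexHull_min (s := (P : Set (EuclideanSpace ℝ (Fin 2))))
    (fun u hu => (em (u = r)).imp_right (hmax u hu)) hC
  rw [mem_extremePoints]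
  refine ⟨subset_convexHull ℝ _ hr, ?_⟩
  rintro x hx y hy ⟨a, b, ha, hb, hab, h⟩
  by_contra hxy
  have := key x y a b ha hb hab (hsub hx) (hsub hy) hxy
  rw [h] at this
  exact lt_irrefl _ this
end
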